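/- Let P : GF(2)^16 -> GF(2) be the polynomial in variables (a,b,c,d,e,f,g,h,y,z,M,N,O,S,Q,R) given by P = bc+cd+dy+yz+zM+MN+eN+ef+fg+gh+hO+OS+SQ+QR+aR+ab+bg+ch+dO+yS+zQ+MR+aN+be+cf+dg+hy+zO+MS+NQ+eR+af. Then the number of x in GF(2)^16 with P(x)=0 is exactly 36864, and the number with P(x)=1 is exactly 28672. -/

import Mathlib

/-- The 16-variable invariant, with (a,b,c,d,e,f,g,h,y,z,M,N,O,S,Q,R)
= (x 0, x 1, ..., x 15). -/
def P16 (x : Fin 16 → ZMod 2) : ZMod 2 :=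
  x 1 * x 2 + x 2 * x 3 + x 3 * x 8 + x 8 * x 9 + x 9 * x 10 + x 10 * x 11 +
  x 4 * x 11 + x 4 * x 5 + x 5 * x 6 + x 6 * x 7 + x 7 * x 12 + x 12 * x 13 +
  x 13 * x 14 + x 14 * x 15 + x 0 * x 15 + x 0 * x 1 + x 1 * x 6 + x 2 * x 7 +
  x 3 * x 12 + x 8 * x 13 + x 9 * x 14 + x 10 * x 15 + x 0 * x 11 + x 1 * x 4 +
  x 2 * x 5 + x 3 * x 6 + x 7 * x 8 + x 9 * x 12 + x 10 * x 13 + x 11 * x 14 +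
  x 4 * x 15 + x 0 * x 5



/-- The quadratic form of rank six that `P16` factors through. -/
def Q6 (y : Fin 6 → ZMod 2) : ZMod 2 :=
  y 1 * y 2 + y 2 * y 3 + y 3 * y 4 + y 4 * y 5 + y 0 * y 1

/-- Linear change of coordinates: six linear forms and ten free coordinates. -/
def coordEquiv : (Fin 16 → ZMod 2) ≃ (Fin 6 → ZMod 2) × (Fin 10 → ZMod 2) where
  toFun x :=
    (![x 0 + x 4 + x 10 + x 14,
      x 1 + x 5 + x 11 + x 15,
      x 2 + x 6 + x 10 + x 14,
      x 3 + x 7 + x 11 + x 15,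
      x 8 + x 10 + x 12 + x 14,
      x 9 + x 11 + x 13 + x 15],
     ![x 4, x 5, x 6, x 7, x 10, x 11, x 12, x 13, x 14, x 15])
  invFun q :=
    ![q.1 0 + q.2 0 + q.2 4 + q.2 8,
      q.1 1 + q.2 1 + q.2 5 + q.2 9,
      q.1 2 + q.2 2 + q.2 4 + q.2 8,
      q.1 3 + q.2 3 + q.2 5 + q.2 9,
      q.2 0,
      q.2 1,
      q.2 2,
      q.2 3,
      q.1 4 + q.2 4 + q.2 6 + q.2 8,
      q.1 5 + q.2 5 + q.2 7 + q.2 9,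
      q.2 4,
      q.2 5,
      q.2 6,
      q.2 7,
      q.2 8,
      q.2 9]
  left_inv x := by
    funext i
    fin_cases i <;> simp <;> grind
  right_inv q := by
    obtain ⟨y, z⟩ := q
    refine Prod.ext ?_ ?_ <;> funext i <;> fin_cases i <;> simp <;> grind

theorem P16_eq (x : Fin 16 → ZMod 2) : P16 x = Q6 (coordEquiv x).1 := by
  simp [P16, Q6, coordEquiv]
  grind

theorem card_P16 (c : ZMod 2) :
    Nat.card {x : Fin 16 → ZMod 2 // P16 x = c} =
      Fintype.card {y : Fin 6 → ZMod 2 // Q6 y = c} * 1024 := by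
  have e1 : {x : Fin 16 → ZMod 2 // P16 x = c} ≃
      {q : (Fin 6 → ZMod 2) × (Fin 10 → ZMod 2) // Q6 q.1 = c} :=
    coordEquiv.subtypeEquiv fun x => by rw [P16_eq]
  have e2 : {q : (Fin 6 → ZMod 2) × (Fin 10 → ZMod 2) // Q6 q.1 = c} ≃
      {y : Fin 6 → ZMod 2 // Q6 y = c} × (Fin 10 → ZMod 2) :=
    { toFun := fun q => (⟨q.1.1, q.2⟩, q.1.2)
      invFun := fun r => ⟨(r.1.1, r.2), r.1.2⟩
      left_inv := fun _ => rfl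
      right_inv := fun _ => rfl }
  rw [Nat.card_congr (e1.trans e2), Nat.card_prod, Nat.card_eq_fintype_card,
    Nat.card_eq_fintype_card (α := Fin 10 → ZMod 2), Fintype.card_fun, ZMod.card, Fintype.card_fin]
  norm_num

theorem card_Q6_zero : Fintype.card {y : Fin 6 → ZMod 2 // Q6 y = 0} = 36 := by
  decide +kernel

theorem card_Q6_one : Fintype.card {y : Fin 6 → ZMod 2 // Q6 y = 1} = 28 := by
  decide +kernel

theorem stmt_16 :
    Nat.card {x : Fin 16 → ZMod 2 // P16 x = 0} = 36864 ∧
    Nat.card {x : Fin 16 → ZMod 2 // P16 x = 1} = 28672 := by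
  rw [card_P16, card_P16, card_Q6_zero, card_Q6_one]
  exact ⟨rfl, rfl⟩
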